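/- arXiv:2201.03656 — 2 statements merged into one kernel-verified Lean document; each statement's English description precedes it below -/
import Mathlib

section
/- For any x₀ ∈ ℝⁿ and any finite horizon T ≥ n, the following are equivalent: (i) x₀ ∈ V*; (ii) there exists an input sequence u(0),…,u(T−1) such that the trajectory of the system with x(0) = x₀ satisfies y(t) = C x(t) = 0 for all t ∈ {0,…,T−1}. -/
/-!
One step of the invariant subspace algorithm sends `W` to the states of `Ker C` that some input
steers into `W`. It is monotone, its `k`-th iterate from `⊤` consists of the states from which the
first `k` outputs can be kept zero, and its greatest fixed point is `V*`. Iterating a monotone map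
downwards strictly lowers the height until a fixed point is reached, so the iteration from `⊤`
arrives at `V*` within as many steps as the length (over a field, the dimension) of the state space.
-/

section FixedPoint

variable {α : Type*}

theorem isFixedPt_iterate_of_height_le [PartialOrder α] {f : α → α} (hf : Monotone f) {a : α}
    (ha : f a ≤ a) {n : ℕ} (hn : Order.height a ≤ n) : Function.IsFixedPt f (f^[n] a) := by
  induction n generalizing a with
  | zero =>
    have hmin : IsMin a := Order.height_eq_zero.mp (nonpos_iff_eq_zero.mp hn)
    exact hmin.eq_of_le ha
  | succ n ih =>
    rcases ha.eq_or_lt with hfix | hlt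
    · rwa [Function.iterate_fixed hfix]
    · have hheight : Order.height (f a) + 1 ≤ n + 1 := by
        exact_mod_cast (Order.height_add_one_le hlt).trans hn
      exact ih (hf ha) ((ENat.add_le_add_iff_right ENat.one_ne_top).mp hheight)

theorem gfp_eq_iterate_top_of_height_le [CompleteLattice α] (f : α →o α) {n : ℕ}
    (hn : Order.height (⊤ : α) ≤ n) : f.gfp = f^[n] ⊤ := by
  apply le_antisymm
  · calc f.gfp = f^[n] f.gfp := (Function.iterate_fixed f.map_gfp n).symm
      _ ≤ f^[n] ⊤ := f.monotone.iterate n le_top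
  · exact f.le_gfp (isFixedPt_iterate_of_height_le f.monotone le_top hn).ge

end FixedPoint

section LinearSystem

variable {R X U Y : Type*} [Ring R] [AddCommGroup X] [Module R X] [AddCommGroup U] [Module R U]
  [AddCommGroup Y] [Module R Y]

/-- `W` is `(A, Im B)`-controlled invariant: `A W ⊆ W + Im B`. -/
def IsControlledInvariant (A : X →ₗ[R] X) (B : U →ₗ[R] X) (W : Submodule R X) : Prop :=
  W ≤ (W ⊔ LinearMap.range B).comap A

/-- One step of the invariant subspace algorithm, `W ↦ Ker C ∩ A⁻¹ (W + Im B)`, bundled as a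
monotone map so that `OrderHom.gfp` applies to it. -/
def invariantSubspaceStep (A : X →ₗ[R] X) (B : U →ₗ[R] X) (C : X →ₗ[R] Y) :
    Submodule R X →o Submodule R X where
  toFun W := LinearMap.ker C ⊓ (W ⊔ LinearMap.range B).comap A
  monotone' _ _ h := inf_le_inf_left _ (Submodule.comap_mono (sup_le_sup_right h _))

/-- The state sequence `x` solves `x (t + 1) = A (x t) + B (u t)` for the input sequence `u`, at all
times `t`; finite horizons are imposed on the outputs only. -/
def IsTrajectory (A : X →ₗ[R] X) (B : U →ₗ[R] X) (x : ℕ → X) (u : ℕ → U) : Prop :=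
  ∀ t, x (t + 1) = A (x t) + B (u t)

variable {A : X →ₗ[R] X} {B : U →ₗ[R] X} {C : X →ₗ[R] Y}

theorem le_invariantSubspaceStep_iff {W : Submodule R X} :
    W ≤ invariantSubspaceStep A B C W ↔ IsControlledInvariant A B W ∧ W ≤ LinearMap.ker C :=
  le_inf_iff.trans and_comm

theorem mem_invariantSubspaceStep_iff {W : Submodule R X} {v : X} :
    v ∈ invariantSubspaceStep A B C W ↔ C v = 0 ∧ ∃ w, A v + B w ∈ W := by
  refine and_congr LinearMap.mem_ker ?_
  rw [SetLike.mem_coe, Submodule.mem_comap, Submodule.mem_sup]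
  constructor
  · rintro ⟨a, ha, _, ⟨w, rfl⟩, hsum⟩
    refine ⟨-w, ?_⟩
    rwa [map_neg, ← hsum, add_neg_cancel_right]
  · rintro ⟨w, hw⟩
    exact ⟨A v + B w, hw, B (-w), ⟨-w, rfl⟩, by rw [map_neg, add_neg_cancel_right]⟩

theorem isTrajectory_zero_input (A : X →ₗ[R] X) (B : U →ₗ[R] X) (x₀ : X) :
    IsTrajectory A B (fun t ↦ (A ^ t) x₀) 0 := fun t ↦ by
  simp [pow_succ']

namespace IsTrajectory

variable {x : ℕ → X} {u : ℕ → U}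

theorem tail (h : IsTrajectory A B x u) :
    IsTrajectory A B (fun t ↦ x (t + 1)) (fun t ↦ u (t + 1)) :=
  fun t ↦ h (t + 1)

theorem cons (h : IsTrajectory A B x u) {v : X} {w : U} (h₀ : x 0 = A v + B w) :
    IsTrajectory A B (fun t ↦ t.casesOn v x) (fun t ↦ t.casesOn w u)
  | 0 => h₀
  | t + 1 => h t

end IsTrajectory

theorem mem_iterate_invariantSubspaceStep_iff {k : ℕ} {x₀ : X} :
    x₀ ∈ (invariantSubspaceStep A B C)^[k] ⊤ ↔
      ∃ x u, x 0 = x₀ ∧ IsTrajectory A B x u ∧ ∀ t < k, C (x t) = 0 := by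
  induction k generalizing x₀ with
  | zero =>
    exact iff_of_true Submodule.mem_top
      ⟨_, 0, by simp, isTrajectory_zero_input A B x₀, fun _ ht ↦ absurd ht (Nat.not_lt_zero _)⟩
  | succ k ih =>
    rw [Function.iterate_succ_apply', mem_invariantSubspaceStep_iff]
    simp only [ih, Nat.forall_lt_succ_left]
    constructor
    · rintro ⟨hC, w, x, u, h₀, htraj, hout⟩
      exact ⟨_, _, rfl, htraj.cons h₀, hC, hout⟩
    · rintro ⟨x, u, rfl, htraj, hC, hout⟩
      exact ⟨hC, u 0, _, _, htraj 0, htraj.tail, hout⟩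

theorem isGreatest_gfp_invariantSubspaceStep (A : X →ₗ[R] X) (B : U →ₗ[R] X) (C : X →ₗ[R] Y) :
    IsGreatest {W | IsControlledInvariant A B W ∧ W ≤ LinearMap.ker C}
      (invariantSubspaceStep A B C).gfp := by
  simpa only [le_invariantSubspaceStep_iff] using
    (invariantSubspaceStep A B C).isGreatest_gfp_le

theorem stmt_7_general {V : Submodule R X}
    (hV : IsGreatest {W | IsControlledInvariant A B W ∧ W ≤ LinearMap.ker C} V)
    {T : ℕ} (hT : Module.length R X ≤ T) (x₀ : X) :
    x₀ ∈ V ↔ ∃ x u, x 0 = x₀ ∧ IsTrajectory A B x u ∧ ∀ t < T, C (x t) = 0 := by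
  rw [Module.length_eq_height] at hT
  rw [hV.unique (isGreatest_gfp_invariantSubspaceStep A B C),
    gfp_eq_iterate_top_of_height_le _ hT, mem_iterate_invariantSubspaceStep_iff]

end LinearSystem

/-- x₀ ∈ V* iff the output can be kept identically zero over any
finite horizon T ≥ n by a suitable input sequence. -/
theorem stmt_7
    (n m p T : ℕ) (hT : n ≤ T)
    (A : Matrix (Fin n) (Fin n) ℝ) (B : Matrix (Fin n) (Fin m) ℝ)
    (C : Matrix (Fin p) (Fin n) ℝ)
    -- V* : largest (A, Im B)-controlled invariant subspace contained in Ker C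
    (Vstar : Submodule ℝ (Fin n → ℝ))
    (hVinv : ∀ v ∈ Vstar, A.mulVec v ∈ Vstar ⊔ LinearMap.range B.mulVecLin)
    (hVker : Vstar ≤ LinearMap.ker C.mulVecLin)
    (hVmax : ∀ W : Submodule ℝ (Fin n → ℝ),
      (∀ v ∈ W, A.mulVec v ∈ W ⊔ LinearMap.range B.mulVecLin) →
      W ≤ LinearMap.ker C.mulVecLin → W ≤ Vstar)
    (x0 : Fin n → ℝ) :
    x0 ∈ Vstar ↔
      ∃ (x : ℕ → Fin n → ℝ) (u : ℕ → Fin m → ℝ),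
        x 0 = x0 ∧
        (∀ t, x (t + 1) = A.mulVec (x t) + B.mulVec (u t)) ∧
        ∀ t < T, C.mulVec (x t) = 0 := by
  have hlength : Module.length ℝ (Fin n → ℝ) ≤ T := by simpa [Module.length_eq_finrank] using hT
  exact stmt_7_general (A := A.mulVecLin) (B := B.mulVecLin) (C := C.mulVecLin)
    ⟨⟨hVinv, hVker⟩, fun W hW ↦ hVmax W hW.1 hW.2⟩ hlength x0
end

section
/- Define the sequence of subspaces S₁ = Im B and S_i = A(S_{i−1} ∩ Ker C) + Im B for i ≥ 2. Then the sequence is nondecreasing (S_i ⊆ S_{i+1} for all i), each S_i is contained in S*, and S_i = S* for every i ≥ n. -/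
/-!
A subspace `W` is conditioned invariant and contains `Im B` exactly when `F W ≤ W`, where
`F W = A (W ∩ Ker C) + Im B` is monotone. Hence `S*` is the least pre-fixed point of `F`, and since
`F 0 = Im B`, the recursion is the Kleene iteration `S_i = F^i 0`. The iterates increase strictly
until they reach a fixed point, which must then be `S*`. As they all lie in `S*`, this takes at most
`dim S*` steps. Starting from `0` instead of `S₁` is what gives the bound `n` rather than `n + 1`.
-/

open Function Order

section KleeneIteration

variable {α : Type*} {f : α → α} {x a : α}

theorem iterate_le_of_map_le [Preorder α] (hf : Monotone f) (hx : x ≤ a) (ha : f a ≤ a) (n : ℕ) :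
    f^[n] x ≤ a :=
  (hf.iterate n hx).trans (hf.antitone_iterate_of_map_le ha n.zero_le)

theorem isFixedPt_iterate_or_le_height_iterate [PartialOrder α] (hf : Monotone f) (hx : x ≤ f x)
    (n : ℕ) : IsFixedPt f (f^[n] x) ∨ n ≤ height (f^[n] x) := by
  induction n with
  | zero => exact .inr (by simp)
  | succ n ih =>
    by_cases hfix : IsFixedPt f (f^[n] x)
    · rw [iterate_succ_apply', hfix.eq]
      exact .inl hfix
    · have hlt : f^[n] x < f^[n + 1] x := by
        refine (hf.monotone_iterate_of_le_map hx n.le_succ).lt_of_ne fun h => hfix ?_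
        exact (iterate_succ_apply' f n x).symm.trans h.symm
      right
      calc
        ((n + 1 : ℕ) : ℕ∞) = n + 1 := Nat.cast_succ n
        _ ≤ height (f^[n] x) + 1 := by gcongr; exact ih.resolve_left hfix
        _ ≤ height (f^[n + 1] x) := height_add_one_le hlt

theorem iterate_eq_of_isLeast_of_height_le [PartialOrder α] (hf : Monotone f) (hx : x ≤ f x)
    (ha : IsLeast {y | x ≤ y ∧ f y ≤ y} a) {n : ℕ} (hn : height a ≤ n) : f^[n] x = a := by
  have hle : f^[n] x ≤ a := iterate_le_of_map_le hf ha.1.1 ha.1.2 n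
  rcases isFixedPt_iterate_or_le_height_iterate hf hx n with hfix | hheight
  · have hxn : x ≤ f^[n] x := hf.monotone_iterate_of_le_map hx n.zero_le
    exact hle.antisymm (ha.2 ⟨hxn, hfix.le⟩)
  · refine hle.eq_of_not_lt fun hlt => ?_
    have hsucc_le : (n : ℕ∞) + 1 ≤ n := calc
      (n : ℕ∞) + 1 ≤ height (f^[n] x) + 1 := by gcongr
      _ ≤ height a := height_add_one_le hlt
      _ ≤ n := hn
    exact ENat.natCast_lt_succ.not_ge hsucc_le

end KleeneIteration

theorem height_submodule_le_finrank {K V : Type*} [DivisionRing K] [AddCommGroup V] [Module K V]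
    [FiniteDimensional K V] (W : Submodule K V) : height W ≤ Module.finrank K V := by
  rw [← Module.length_submodule, Module.length_eq_finrank]
  exact_mod_cast W.finrank_le

section ConditionedInvariant

variable {R M : Type*} [Semiring R] [AddCommMonoid M] [Module R M]
  (A : Module.End R M) (N E : Submodule R M)

/-- `(A, N)`-conditioned invariance of a submodule `W`: `A (W ∩ N) ⊆ W`. The output map `C` enters
only through its kernel `N`. -/
def IsConditionedInvariant (W : Submodule R M) : Prop :=
  (W ⊓ N).map A ≤ W

/-- The map `W ↦ A (W ∩ N) + E` iterated by the conditioned invariant subspace algorithm. The input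
map `B` enters only through its image `E`. -/
def conditionedInvariantStep (W : Submodule R M) : Submodule R M :=
  (W ⊓ N).map A ⊔ E

theorem conditionedInvariantStep_mono : Monotone (conditionedInvariantStep A N E) :=
  fun _ _ h => sup_le_sup_right (Submodule.map_mono (inf_le_inf_right N h)) E

theorem conditionedInvariantStep_bot : conditionedInvariantStep A N E ⊥ = E := by
  simp [conditionedInvariantStep]

variable {A N E}

theorem conditionedInvariantStep_le_iff {W : Submodule R M} :
    conditionedInvariantStep A N E W ≤ W ↔ IsConditionedInvariant A N W ∧ E ≤ W :=
  sup_le_iff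

theorem eq_iterate_conditionedInvariantStep {Sseq : ℕ → Submodule R M} (h_one : Sseq 1 = E)
    (h_succ : ∀ i, 1 ≤ i → Sseq (i + 1) = (Sseq i ⊓ N).map A ⊔ E) {i : ℕ} (hi : 1 ≤ i) :
    Sseq i = (conditionedInvariantStep A N E)^[i] ⊥ := by
  induction i, hi using Nat.le_induction with
  | base => rw [h_one, iterate_one, conditionedInvariantStep_bot]
  | succ i hi ih => rw [h_succ i hi, iterate_succ_apply', ← ih, conditionedInvariantStep]

theorem stmt_11_general {Sstar : Submodule R M}
    (hSstar : IsLeast {W | IsConditionedInvariant A N W ∧ E ≤ W} Sstar)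
    {Sseq : ℕ → Submodule R M} (h_one : Sseq 1 = E)
    (h_succ : ∀ i, 1 ≤ i → Sseq (i + 1) = (Sseq i ⊓ N).map A ⊔ E) :
    (∀ i, 1 ≤ i → Sseq i ≤ Sseq (i + 1)) ∧
    (∀ i, 1 ≤ i → Sseq i ≤ Sstar) ∧
    (∀ i : ℕ, 1 ≤ i → height Sstar ≤ i → Sseq i = Sstar) := by
  have hmono := conditionedInvariantStep_mono A N E
  have hiter {i : ℕ} (hi : 1 ≤ i) : Sseq i = (conditionedInvariantStep A N E)^[i] ⊥ :=
    eq_iterate_conditionedInvariantStep h_one h_succ hi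
  have hleast : IsLeast {W | ⊥ ≤ W ∧ conditionedInvariantStep A N E W ≤ W} Sstar := by
    simpa only [bot_le, true_and, conditionedInvariantStep_le_iff] using hSstar
  refine ⟨fun i hi => ?_, fun i hi => ?_, fun i hi hheight => ?_⟩
  · rw [hiter hi, hiter (Nat.le_add_left 1 i)]
    exact hmono.monotone_iterate_of_le_map bot_le i.le_succ
  · rw [hiter hi]
    exact iterate_le_of_map_le hmono bot_le hleast.1.2 i
  · rw [hiter hi]
    exact iterate_eq_of_isLeast_of_height_le hmono bot_le hleast hheight

end ConditionedInvariant

/-- the recursion S₁ = Im B, S_i = A(S_{i−1} ∩ Ker C) + Im B is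
nondecreasing, each term is contained in S*, and it converges to S* in at most
n steps. -/
theorem stmt_11
    (n m p : ℕ)
    (A : Matrix (Fin n) (Fin n) ℝ) (B : Matrix (Fin n) (Fin m) ℝ)
    (C : Matrix (Fin p) (Fin n) ℝ)
    -- S* : smallest (A, Ker C)-conditioned invariant subspace containing Im B
    (Sstar : Submodule ℝ (Fin n → ℝ))
    (hSinv : ∀ v ∈ Sstar ⊓ LinearMap.ker C.mulVecLin, A.mulVec v ∈ Sstar)
    (hSim : LinearMap.range B.mulVecLin ≤ Sstar)
    (hSmin : ∀ W : Submodule ℝ (Fin n → ℝ),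
      (∀ v ∈ W ⊓ LinearMap.ker C.mulVecLin, A.mulVec v ∈ W) →
      LinearMap.range B.mulVecLin ≤ W → Sstar ≤ W)
    -- the recursive sequence of subspaces (defined for i ≥ 1)
    (Sseq : ℕ → Submodule ℝ (Fin n → ℝ))
    (hS1 : Sseq 1 = LinearMap.range B.mulVecLin)
    (hSsucc : ∀ i, 1 ≤ i → Sseq (i + 1) =
      Submodule.map A.mulVecLin (Sseq i ⊓ LinearMap.ker C.mulVecLin) ⊔
        LinearMap.range B.mulVecLin) :
    (∀ i, 1 ≤ i → Sseq i ≤ Sseq (i + 1)) ∧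
    (∀ i, 1 ≤ i → Sseq i ≤ Sstar) ∧
    (∀ i, 1 ≤ i → n ≤ i → Sseq i = Sstar) := by
  have hSstar : IsLeast {W | IsConditionedInvariant A.mulVecLin (LinearMap.ker C.mulVecLin) W ∧
      LinearMap.range B.mulVecLin ≤ W} Sstar :=
    ⟨⟨Submodule.map_le_iff_le_comap.2 hSinv, hSim⟩,
      fun W hW => hSmin W (Submodule.map_le_iff_le_comap.1 hW.1) hW.2⟩
  have hheight : height Sstar ≤ n := by simpa using height_submodule_le_finrank Sstar
  obtain ⟨hmono, hle, heq⟩ := stmt_11_general hSstar hS1 hSsucc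
  exact ⟨hmono, hle, fun i hi hn => heq i hi (hheight.trans (Nat.cast_le.2 hn))⟩
end
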